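/- The product of transfer matrices reproduces the quantum determinant at the inhomogeneity points: for every b ∈ {1, …, N}, T₁(ζ_b) T₂(ζ_b/p) = det(K) · ∏_{c=1}^{N} (ξ_b q/ξ_c − ξ_c/(q ξ_b)) (ξ_b/(q ξ_c) − q ξ_c/ξ_b) (ξ_b/(q² ξ_c) − q² ξ_c/ξ_b) · Id_H, i.e. this product is the explicit central scalar given by the quantum determinant q-det M(λ) evaluated at λ = ξ_b, times the identity of H. -/

import Mathlib

open Matrix Kronecker BigOperators

/-- Elementary 3×3 matrices `E i j`. -/
noncomputable def Eb (i j : Fin 3) : Matrix (Fin 3) (Fin 3) ℂ :=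
  Matrix.single i j 1

/-- Principal gradation trigonometric R-matrix of `U_q(gl₃^)`, with spectral
parameter `λ = u³` parametrized by the cube root `u`. -/
noncomputable def RpM (q u : ℂ) : Matrix (Fin 3 × Fin 3) (Fin 3 × Fin 3) ℂ :=
  (∑ k : Fin 3, ∑ p : Fin 3,
    if k = p then (u ^ 3 * q - (u ^ 3 * q)⁻¹) • (Eb k k ⊗ₖ Eb k k)
    else (u ^ 3 - (u ^ 3)⁻¹) • (Eb k k ⊗ₖ Eb p p))
  + (q - q⁻¹) • ∑ k : Fin 3, ∑ p : Fin 3,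
      (if k < p then
        u ^ ((3 : ℤ) - 2 * (((p : ℕ) : ℤ) - ((k : ℕ) : ℤ))) • (Eb k p ⊗ₖ Eb p k)
        + u ^ (2 * (((p : ℕ) : ℤ) - ((k : ℕ) : ℤ)) - (3 : ℤ)) • (Eb p k ⊗ₖ Eb k p)
      else 0)

/-- Index type of the quantum space `H = (ℂ³)^{⊗N}`. -/
abbrev HIdx (N : ℕ) := Fin N → Fin 3

/-- `R_{a,b}(u)`: the R-matrix acting on the auxiliary space and the `b`-th
factor of the quantum space, identity elsewhere. -/
noncomputable def Raux (N : ℕ) (q u : ℂ) (b : Fin N) :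
    Matrix (Fin 3 × HIdx N) (Fin 3 × HIdx N) ℂ :=
  Matrix.of fun x y =>
    RpM q u (x.1, x.2 b) (y.1, y.2 b) * (if ∀ c, c ≠ b → x.2 c = y.2 c then 1 else 0)

/-- The twist matrix acting on the auxiliary space, identity on `H`. -/
noncomputable def Kaux (N : ℕ) (K : Matrix (Fin 3) (Fin 3) ℂ) :
    Matrix (Fin 3 × HIdx N) (Fin 3 × HIdx N) ℂ :=
  Matrix.of fun x y => K x.1 y.1 * (if x.2 = y.2 then 1 else 0)

/-- Monodromy matrix `M(u) = K_a R_{a,N}(u/ζ_N) ⋯ R_{a,1}(u/ζ_1)`. -/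
noncomputable def Mon (N : ℕ) (q : ℂ) (ζ : Fin N → ℂ) (K : Matrix (Fin 3) (Fin 3) ℂ)
    (u : ℂ) : Matrix (Fin 3 × HIdx N) (Fin 3 × HIdx N) ℂ :=
  Kaux N K * (((List.finRange N).reverse.map fun b => Raux N q (u / ζ b) b).prod)

/-- Transfer matrix `T₁(u) = tr_a M(u)`. -/
noncomputable def T1 (N : ℕ) (q : ℂ) (ζ : Fin N → ℂ) (K : Matrix (Fin 3) (Fin 3) ℂ)
    (u : ℂ) : Matrix (HIdx N) (HIdx N) ℂ :=
  Matrix.of fun f g => ∑ i : Fin 3, Mon N q ζ K u (i, f) (i, g)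

/-- The q-antisymmetric projector `P⁻ = R_q(p⁻¹)/(2(q⁻¹ − q))`. -/
noncomputable def Pm (q p : ℂ) : Matrix (Fin 3 × Fin 3) (Fin 3 × Fin 3) ℂ :=
  (2 * (q⁻¹ - q))⁻¹ • RpM q p⁻¹

/-- Embedding of an operator on (auxiliary space a) ⊗ H into
(aux a) ⊗ (aux b) ⊗ H, identity on aux b. -/
noncomputable def embA (N : ℕ) (M : Matrix (Fin 3 × HIdx N) (Fin 3 × HIdx N) ℂ) :
    Matrix (Fin 3 × Fin 3 × HIdx N) (Fin 3 × Fin 3 × HIdx N) ℂ :=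
  Matrix.of fun x y => M (x.1, x.2.2) (y.1, y.2.2) * (if x.2.1 = y.2.1 then 1 else 0)

/-- Embedding of an operator on (auxiliary space b) ⊗ H into
(aux a) ⊗ (aux b) ⊗ H, identity on aux a. -/
noncomputable def embB (N : ℕ) (M : Matrix (Fin 3 × HIdx N) (Fin 3 × HIdx N) ℂ) :
    Matrix (Fin 3 × Fin 3 × HIdx N) (Fin 3 × Fin 3 × HIdx N) ℂ :=
  Matrix.of fun x y => M (x.2.1, x.2.2) (y.2.1, y.2.2) * (if x.1 = y.1 then 1 else 0)

/-- Embedding of an operator on (aux a) ⊗ (aux b) into (aux a) ⊗ (aux b) ⊗ H. -/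
noncomputable def embP (N : ℕ) (P : Matrix (Fin 3 × Fin 3) (Fin 3 × Fin 3) ℂ) :
    Matrix (Fin 3 × Fin 3 × HIdx N) (Fin 3 × Fin 3 × HIdx N) ℂ :=
  Matrix.of fun x y => P (x.1, x.2.1) (y.1, y.2.1) * (if x.2.2 = y.2.2 then 1 else 0)

/-- Fused transfer matrix `T₂(u) = tr_{ab}(P⁻_{ab} M_b(u) M_a(u/p))`. -/
noncomputable def T2 (N : ℕ) (q p : ℂ) (ζ : Fin N → ℂ) (K : Matrix (Fin 3) (Fin 3) ℂ)
    (u : ℂ) : Matrix (HIdx N) (HIdx N) ℂ :=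
  Matrix.of fun f g => ∑ ia : Fin 3, ∑ ib : Fin 3,
    (embP N (Pm q p) * embB N (Mon N q ζ K u) * embA N (Mon N q ζ K (u / p)))
      (ia, ib, f) (ia, ib, g)

section LocalOperators

set_option maxHeartbeats 1000000 in
/-- The R-matrix entry at row `(i, k)`, column `(j, l)`, with the cyclic symmetry of the principal
gradation made explicit. -/
theorem RpM_apply (q u : ℂ) (i k j l : Fin 3) :
    RpM q u (i, k) (j, l) =
      if i = j ∧ k = l then
        (if i = k then u ^ 3 * q - (u ^ 3 * q)⁻¹ else u ^ 3 - (u ^ 3)⁻¹)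
      else if i = l ∧ k = j then (q - q⁻¹) * (if k = i + 1 then u else u⁻¹)
      else 0 := by
  simp only [RpM, Eb, Fin.sum_univ_three, Matrix.add_apply, Matrix.smul_apply, smul_eq_mul,
    Matrix.kroneckerMap_apply, Matrix.single_apply, Fin.isValue, Fin.reduceEq, Fin.reduceLT,
    ↓reduceIte, Matrix.zero_apply]
  fin_cases i <;> fin_cases k <;> fin_cases j <;> fin_cases l <;> simp [_root_.zpow_neg]

/-- The Lax operator: the R-matrix as a matrix over the auxiliary space with entries in the
operators of a single quantum site. -/
noncomputable def laxOp (q u : ℂ) : Matrix (Fin 3) (Fin 3) (Matrix (Fin 3) (Fin 3) ℂ) :=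
  Matrix.of fun i j => Matrix.of fun k l => RpM q u (i, k) (j, l)

/-- The Lax operator of `R₂₁(u⁻¹)`, which inverts `laxOp q u` up to a scalar. -/
noncomputable def laxInv (q u : ℂ) : Matrix (Fin 3) (Fin 3) (Matrix (Fin 3) (Fin 3) ℂ) :=
  Matrix.of fun i j => Matrix.of fun k l => RpM q u⁻¹ (k, i) (l, j)

/-- Columns: a basis of the q-antisymmetric subspace of `ℂ³ ⊗ ℂ³`. -/
noncomputable def antisymBasis (r : ℂ) : Matrix (Fin 3 × Fin 3) (Fin 3) ℂ :=
  Matrix.of fun x j => if x = (j + 1, j + 2) then 1 else if x = (j + 2, j + 1) then -r else 0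

/-- Rows: the functionals dual to `antisymBasis` that factor the q-antisymmetric projector. -/
noncomputable def antisymDual (r : ℂ) : Matrix (Fin 3) (Fin 3 × Fin 3) ℂ :=
  Matrix.of fun j x =>
    if x = (j + 1, j + 2) then 2⁻¹ else if x = (j + 2, j + 1) then -(2 * r)⁻¹ else 0

theorem antisymDual_mul_antisymBasis {r : ℂ} (hr : r ≠ 0) :
    antisymDual r * antisymBasis r = 1 := by
  ext i j
  fin_cases i <;> fin_cases j <;>
    simp [Matrix.mul_apply, Fintype.sum_prod_type, Fin.sum_univ_three, antisymDual,
      antisymBasis] <;> try (field_simp; norm_num)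

theorem antisymBasis_mul_antisymDual {r : ℂ} (hr : r ≠ 0) (hr2 : (r ^ 3) ^ 2 ≠ 1) :
    antisymBasis r * antisymDual r = Pm (r ^ 3) r := by
  have h : 2 * ((r ^ 3)⁻¹ - r ^ 3) ≠ 0 := by
    refine mul_ne_zero two_ne_zero fun h0 => hr2 ?_
    field_simp at h0
    linear_combination -h0
  rw [Pm, eq_inv_smul_iff₀ h]
  ext ⟨a, b⟩ ⟨c, d⟩
  rw [Matrix.smul_apply, RpM_apply]
  fin_cases a <;> fin_cases b <;> fin_cases c <;> fin_cases d <;>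
    simp [Matrix.mul_apply, Fin.sum_univ_three, antisymDual, antisymBasis] <;>
    field_simp <;> ring

theorem laxOp_mul_laxInv {q u : ℂ} (hq : q ≠ 0) (hu : u ≠ 0) :
    laxOp q u * laxInv q u =
      ((u ^ 3 * q - (u ^ 3 * q)⁻¹) * (q / u ^ 3 - u ^ 3 / q)) •
        (1 : Matrix (Fin 3) (Fin 3) (Matrix (Fin 3) (Fin 3) ℂ)) := by
  ext i j k l
  simp only [Matrix.mul_apply, Fin.sum_univ_three, Matrix.add_apply, laxOp, laxInv,
    Matrix.of_apply, RpM_apply, Matrix.smul_apply, smul_eq_mul, Matrix.one_apply]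
  fin_cases i <;> fin_cases j <;> fin_cases k <;> fin_cases l <;>
    simp [-mul_eq_mul_left_iff, -mul_eq_mul_right_iff, -mul_eq_zero] <;>
    field_simp <;> ring1

theorem laxOp_one (q : ℂ) (i j : Fin 3) :
    laxOp q 1 i j = (q - q⁻¹) • Matrix.single j i 1 := by
  ext k l
  simp only [laxOp, Matrix.of_apply, RpM_apply]
  fin_cases i <;> fin_cases j <;> fin_cases k <;> fin_cases l <;> simp [Matrix.single]

theorem laxInv_one (q : ℂ) (i j : Fin 3) :
    laxInv q 1 i j = (q - q⁻¹) • Matrix.single j i 1 := by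
  ext k l
  simp only [laxInv, Matrix.of_apply, RpM_apply]
  fin_cases i <;> fin_cases j <;> fin_cases k <;> fin_cases l <;> simp [Matrix.single]

section Fusion

variable {A : Type*} [Ring A] [Algebra ℂ A]

/-- `X_b Y_a` on two auxiliary spaces, for `X`, `Y` with entries in an operator algebra. -/
def pairOp (X Y : Matrix (Fin 3) (Fin 3) A) : Matrix (Fin 3 × Fin 3) (Fin 3 × Fin 3) A :=
  Matrix.of fun x y => X x.2 y.2 * Y x.1 y.1

/-- `X_b Y_a` preserves the q-antisymmetric subspace and acts on it by `Z`. -/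
def Fuses (r : ℂ) (X Y Z : Matrix (Fin 3) (Fin 3) A) : Prop :=
  pairOp X Y * (antisymBasis r).map (algebraMap ℂ A) =
    (antisymBasis r).map (algebraMap ℂ A) * Z

theorem pairOp_mul_antisymBasis_apply (r : ℂ) (X Y : Matrix (Fin 3) (Fin 3) A) (a b j : Fin 3) :
    (pairOp X Y * (antisymBasis r).map (algebraMap ℂ A)) (a, b) j =
      X b (j + 2) * Y a (j + 1) - r • (X b (j + 1) * Y a (j + 2)) := by
  rw [Algebra.smul_def, Algebra.commutes]
  fin_cases j <;>
    simp [Matrix.mul_apply, Fintype.sum_prod_type, Fin.sum_univ_three, pairOp, antisymBasis] <;>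
    noncomm_ring

theorem antisymBasis_mul_apply (r : ℂ) (Z : Matrix (Fin 3) (Fin 3) A) (a b j : Fin 3) :
    ((antisymBasis r).map (algebraMap ℂ A) * Z) (a, b) j =
      if b = a + 1 then Z (a + 2) j else if b = a + 2 then -(r • Z (a + 1) j) else 0 := by
  rw [Algebra.smul_def]
  fin_cases a <;> fin_cases b <;>
    simp [Matrix.mul_apply, Fin.sum_univ_three, antisymBasis]

end Fusion

set_option maxHeartbeats 4000000 in
theorem fuses_laxOp {r u : ℂ} (hr : r ≠ 0) (hu : u ≠ 0) :
    Fuses r (laxOp (r ^ 3) (u / r)) (laxOp (r ^ 3) (u / r / r))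
      (((r ^ 3) ^ 2 / u ^ 3 - u ^ 3 / (r ^ 3) ^ 2) • laxInv (r ^ 3) u)ᵀ := by
  ext ⟨a, b⟩ j k n
  rw [pairOp_mul_antisymBasis_apply, antisymBasis_mul_apply]
  simp only [Matrix.mul_apply, Fin.sum_univ_three, Matrix.sub_apply, laxOp, laxInv,
    Matrix.of_apply, RpM_apply, Matrix.smul_apply, smul_eq_mul, Matrix.transpose_apply,
    apply_ite (fun M : Matrix (Fin 3) (Fin 3) ℂ => M k n), Matrix.neg_apply, Matrix.zero_apply]
  fin_cases j <;> fin_cases a <;> fin_cases b <;> fin_cases k <;> fin_cases n <;>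
    simp [-mul_eq_mul_left_iff, -mul_eq_mul_right_iff, -mul_eq_zero, -neg_inj] <;>
    field_simp <;> ring1

end LocalOperators

section Fusion

variable {A B : Type*} [Ring A] [Ring B]

/-- All entries of `X` commute with all entries of `Y`. -/
def EntriesCommute {m n : Type*} (X : Matrix m m A) (Y : Matrix n n A) : Prop :=
  ∀ i j k l, Commute (X i j) (Y k l)

namespace EntriesCommute

variable {X Y Z : Matrix (Fin 3) (Fin 3) A}

theorem symm (h : EntriesCommute X Y) : EntriesCommute Y X :=
  fun i j k l => (h k l i j).symm

theorem transpose_right (h : EntriesCommute X Y) : EntriesCommute X Yᵀ :=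
  fun i j k l => h i j l k

theorem mul_right (hY : EntriesCommute X Y) (hZ : EntriesCommute X Z) :
    EntriesCommute X (Y * Z) := fun i j k l => by
  rw [Matrix.mul_apply]
  exact Commute.sum_right _ _ _ fun m _ => (hY i j k m).mul_right (hZ i j m l)

theorem transpose_left (h : EntriesCommute X Y) : EntriesCommute Xᵀ Y :=
  h.symm.transpose_right.symm

theorem mul_left (hX : EntriesCommute X Z) (hY : EntriesCommute Y Z) :
    EntriesCommute (X * Y) Z :=
  EntriesCommute.symm (EntriesCommute.mul_right hX.symm hY.symm)

theorem one_right : EntriesCommute X (1 : Matrix (Fin 3) (Fin 3) A) := fun i j k l => by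
  rw [Matrix.one_apply]
  split_ifs
  exacts [Commute.one_right _, Commute.zero_right _]

theorem list_prod_right {L : List (Matrix (Fin 3) (Fin 3) A)}
    (h : ∀ Y ∈ L, EntriesCommute X Y) : EntriesCommute X L.prod := by
  induction L with
  | nil => simpa using one_right
  | cons Y L ih =>
    rw [List.prod_cons]
    exact (h Y (by simp)).mul_right (ih fun Z hZ => h Z (by simp [hZ]))

theorem map_algebraMap_right [Algebra ℂ A] (K : Matrix (Fin 3) (Fin 3) ℂ) :
    EntriesCommute X (K.map (algebraMap ℂ A)) :=
  fun _ _ _ _ => (Algebra.commutes _ _).symm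

theorem transpose_mul (h : EntriesCommute X Y) : (X * Y)ᵀ = Yᵀ * Xᵀ := by
  ext i j
  simp only [Matrix.transpose_apply, Matrix.mul_apply]
  exact Finset.sum_congr rfl fun k _ => h j k k i

end EntriesCommute

theorem pairOp_mul {X₁ X₂ Y₁ Y₂ : Matrix (Fin 3) (Fin 3) A} (h : EntriesCommute Y₁ X₂) :
    pairOp (X₁ * X₂) (Y₁ * Y₂) = pairOp X₁ Y₁ * pairOp X₂ Y₂ := by
  ext ⟨a, b⟩ ⟨c, d⟩
  simp only [pairOp, Matrix.of_apply, Matrix.mul_apply, Fintype.sum_prod_type,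
    Finset.sum_mul_sum]
  rw [Finset.sum_comm]
  refine Finset.sum_congr rfl fun i _ => Finset.sum_congr rfl fun j _ => ?_
  rw [mul_assoc, ← mul_assoc (X₂ j d), ← (h a i j d).eq]
  noncomm_ring

theorem pairOp_one : pairOp (1 : Matrix (Fin 3) (Fin 3) A) 1 = 1 := by
  ext ⟨a, b⟩ ⟨c, d⟩
  simp only [pairOp, Matrix.of_apply, Matrix.one_apply, Prod.mk.injEq, ite_and]
  split_ifs <;> simp

variable [Algebra ℂ A] [Algebra ℂ B]

namespace Fuses

variable {r : ℂ}

theorem mul {X₁ X₂ Y₁ Y₂ Z₁ Z₂ : Matrix (Fin 3) (Fin 3) A} (h₁ : Fuses r X₁ Y₁ Z₁)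
    (h₂ : Fuses r X₂ Y₂ Z₂) (h : EntriesCommute Y₁ X₂) :
    Fuses r (X₁ * X₂) (Y₁ * Y₂) (Z₁ * Z₂) := by
  unfold Fuses at *
  rw [pairOp_mul h, Matrix.mul_assoc, h₂, ← Matrix.mul_assoc, h₁, Matrix.mul_assoc]

theorem one : Fuses r (1 : Matrix (Fin 3) (Fin 3) A) 1 1 := by
  rw [Fuses, pairOp_one, Matrix.one_mul, Matrix.mul_one]

theorem map {X Y Z : Matrix (Fin 3) (Fin 3) A} (h : Fuses r X Y Z) (f : A →ₐ[ℂ] B) :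
    Fuses r (X.map f) (Y.map f) (Z.map f) := by
  have hV : (antisymBasis r).map (algebraMap ℂ B) =
      ((antisymBasis r).map (algebraMap ℂ A)).map f := by
    ext
    simp
  have hO : pairOp (X.map f) (Y.map f) = (pairOp X Y).map f := by
    ext
    simp [pairOp]
  have hmap := congrArg (fun M => M.map f) h
  rw [Fuses, hV, hO]
  simpa only [Matrix.map_mul] using hmap

/-- The trace of `X_b Y_a` over the range of the q-antisymmetric projector. -/
theorem sum_projector_mul {X Y Z : Matrix (Fin 3) (Fin 3) A} (h : Fuses r X Y Z) (hr : r ≠ 0) :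
    ∑ x, ∑ y, (antisymBasis r * antisymDual r) x y • pairOp X Y y x = Z.trace := by
  have hW : (antisymDual r).map (algebraMap ℂ A) * (antisymBasis r).map (algebraMap ℂ A) = 1 := by
    rw [← Matrix.map_mul, antisymDual_mul_antisymBasis hr,
      Matrix.map_one _ (map_zero _) (map_one _)]
  have h' : (antisymDual r).map (algebraMap ℂ A) *
      (pairOp X Y * (antisymBasis r).map (algebraMap ℂ A)) = Z := by
    rw [h, ← Matrix.mul_assoc, hW, Matrix.one_mul]
  rw [← h', Matrix.trace]
  have hterm (j : Fin 3) (x y : Fin 3 × Fin 3) :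
      algebraMap ℂ A (antisymDual r j y) * (pairOp X Y y x * algebraMap ℂ A (antisymBasis r x j)) =
        (antisymBasis r x j * antisymDual r j y) • pairOp X Y y x := by
    rw [← Algebra.commutes, ← Algebra.smul_def, ← Algebra.smul_def, smul_smul, mul_comm]
  simp only [Matrix.diag_apply, Matrix.mul_apply, Matrix.map_apply, Finset.sum_smul,
    Finset.mul_sum, hterm]
  calc _ = ∑ y, ∑ x, ∑ j, (antisymBasis r x j * antisymDual r j y) • pairOp X Y y x :=
        Finset.sum_comm
    _ = ∑ y, ∑ j, ∑ x, (antisymBasis r x j * antisymDual r j y) • pairOp X Y y x :=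
        Finset.sum_congr rfl fun y _ => Finset.sum_comm
    _ = _ := Finset.sum_comm

end Fuses

/-- The twist acts on the q-antisymmetric subspace by its matrix of minors, each of which reduces
to a single product. -/
theorem twist_fuses {r : ℂ} (hr : r ≠ 0) (hr2 : (r ^ 3) ^ 2 ≠ 1) {K : Matrix (Fin 3) (Fin 3) ℂ}
    (hK : Pm (r ^ 3) r * (K ⊗ₖ K) = (K ⊗ₖ K) * Pm (r ^ 3) r) :
    ∃ Z : Matrix (Fin 3) (Fin 3) ℂ, Fuses r K K Z ∧ K * Zᵀ = K.det • 1 := by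
  have hr1 : 1 - r ≠ 0 := fun h => hr2 (by rw [← sub_eq_zero.mp h]; norm_num)
  have hr1' : 1 - r ^ 2 ≠ 0 := fun h => hr2 (by
    rw [← pow_mul, mul_comm, pow_mul, ← sub_eq_zero.mp h, one_pow])
  have hO : pairOp K K = K ⊗ₖ K := by
    ext
    simp [pairOp, mul_comm]
  have hF : Fuses r K K (antisymDual r * (pairOp K K * antisymBasis r)) := by
    have hV : (antisymBasis r).map (algebraMap ℂ ℂ) = antisymBasis r := by ext; simp
    rw [Fuses, hV, ← Matrix.mul_assoc, antisymBasis_mul_antisymDual hr hr2, hO,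
      ← Matrix.mul_assoc, hK, Matrix.mul_assoc, ← antisymBasis_mul_antisymDual hr hr2,
      Matrix.mul_assoc, antisymDual_mul_antisymBasis hr, Matrix.mul_one]
  refine ⟨_, hF, ?_⟩
  generalize antisymDual r * (pairOp K K * antisymBasis r) = Z at hF
  have hE (a b j : Fin 3) : K b (j + 2) * K a (j + 1) - r • (K b (j + 1) * K a (j + 2)) =
      if b = a + 1 then Z (a + 2) j else if b = a + 2 then -(r • Z (a + 1) j) else 0 := by
    rw [← pairOp_mul_antisymBasis_apply, hF, antisymBasis_mul_apply]
  have hrow (a j : Fin 3) : K a (j + 1) * K a (j + 2) = 0 := by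
    have h : K a (j + 2) * K a (j + 1) - r * (K a (j + 1) * K a (j + 2)) = 0 := by
      simpa using hE a a j
    have h' : (1 - r) * (K a (j + 1) * K a (j + 2)) = 0 := by linear_combination h
    exact (mul_eq_zero.mp h').resolve_left hr1
  have hE₁ (i j : Fin 3) : K (i + 2) (j + 2) * K (i + 1) (j + 1) -
      r * (K (i + 2) (j + 1) * K (i + 1) (j + 2)) = Z i j := by
    have h := hE (i + 1) (i + 2) j
    fin_cases i <;> simpa using h
  have hanti (i j : Fin 3) : K (i + 2) (j + 1) * K (i + 1) (j + 2) = 0 := by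
    have h₂ : K (i + 1) (j + 2) * K (i + 2) (j + 1) -
        r * (K (i + 1) (j + 1) * K (i + 2) (j + 2)) = -(r * Z i j) := by
      have h := hE (i + 2) (i + 1) j
      fin_cases i <;> simpa using h
    have h : (1 - r ^ 2) * (K (i + 2) (j + 1) * K (i + 1) (j + 2)) = 0 := by
      linear_combination r * hE₁ i j + h₂
    exact (mul_eq_zero.mp h).resolve_left hr1'
  have hZ (i j : Fin 3) : Z i j = K (i + 1) (j + 1) * K (i + 2) (j + 2) := by
    linear_combination -hE₁ i j - r * hanti i j
  have hoff (a c : Fin 3) :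
      K c 0 * (K a 1 * K a 2) + K c 1 * (K a 2 * K a 0) + K c 2 * (K a 0 * K a 1) = 0 := by
    have h₀ : K a 1 * K a 2 = 0 := hrow a 0
    have h₁ : K a 2 * K a 0 = 0 := hrow a 1
    have h₂ : K a 0 * K a 1 = 0 := hrow a 2
    rw [h₀, h₁, h₂]
    ring
  have h₀ : K 2 1 * K 1 2 = 0 := hanti 0 0
  have h₁ : K 2 2 * K 1 0 = 0 := hanti 0 1
  have h₂ : K 2 0 * K 1 1 = 0 := hanti 0 2
  have hdiag : K 0 0 * (K 2 1 * K 1 2) + K 0 1 * (K 2 2 * K 1 0) + K 0 2 * (K 2 0 * K 1 1) = 0 := by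
    rw [h₀, h₁, h₂]
    ring
  ext i l
  simp only [Matrix.mul_apply, Fin.sum_univ_three, Matrix.transpose_apply, hZ, Matrix.det_fin_three,
    Matrix.smul_apply, Matrix.one_apply, smul_eq_mul]
  fin_cases i <;> fin_cases l <;> simp
  · linear_combination hdiag
  · linear_combination hoff 0 2
  · linear_combination hoff 0 1
  · linear_combination hoff 1 2
  · linear_combination hdiag
  · linear_combination hoff 1 0
  · linear_combination hoff 2 1
  · linear_combination hoff 2 0
  · linear_combination hdiag

/-- The reflection argument: `T₁` and `T₂` factor through the local permutation at one site. -/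
theorem trace_mul_trace_of_matrixUnits {X X' Y Y' E : Matrix (Fin 3) (Fin 3) A} {dX dY : ℂ}
    (hX : X * X' = dX • 1) (hY : Y * Y' = dY • 1)
    (hXY : EntriesCommute X Y) (hX'Y' : EntriesCommute X' Y') (hEY : EntriesCommute E Y)
    (hEX' : EntriesCommute E X') (hEY' : EntriesCommute E Y')
    (hmul : ∀ i j k l, E i j * E k l = if i = l then E k j else 0)
    (hone : E.trace = 1) :
    (X * E * Y).trace * (Y' * E * X').trace = (dX * dY) • 1 := by
  have hleft : (X * E * Y).trace = ∑ k, ∑ j, (Y * X) k j * E j k := by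
    simp only [Matrix.trace, Matrix.diag_apply, Matrix.mul_apply, Finset.sum_mul]
    rw [Finset.sum_comm]
    refine Finset.sum_congr rfl fun k _ => ?_
    rw [Finset.sum_comm]
    refine Finset.sum_congr rfl fun j _ => Finset.sum_congr rfl fun i _ => ?_
    rw [mul_assoc, (hEY j k k i).eq, ← mul_assoc, (hXY i j k i).eq]
  have hright : (Y' * E * X').trace = ∑ n, ∑ m, E m n * (X' * Y') n m := by
    simp only [Matrix.trace, Matrix.diag_apply, Matrix.mul_apply, Finset.sum_mul, Finset.mul_sum]
    rw [Finset.sum_comm]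
    refine Finset.sum_congr rfl fun n _ => ?_
    rw [Finset.sum_comm]
    refine Finset.sum_congr rfl fun m _ => Finset.sum_congr rfl fun l _ => ?_
    rw [← (hEY' m n l m).eq, mul_assoc, (hX'Y' n l l m).eq]
  have hEX'Y' : EntriesCommute E (X' * Y') := hEX'.mul_right hEY'
  have hprod : Y * X * (X' * Y') = (dX * dY) • 1 := by
    rw [Matrix.mul_assoc, ← Matrix.mul_assoc X, hX]
    simp [hY, smul_smul]
  calc (X * E * Y).trace * (Y' * E * X').trace
      = ∑ k, ∑ m, ∑ j, (Y * X) k j * ((X' * Y') j m * E m k) := by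
        rw [hleft, hright, Finset.sum_mul]
        refine Finset.sum_congr rfl fun k _ => ?_
        rw [Finset.sum_comm (s := Finset.univ) (t := Finset.univ)
          (f := fun m j => (Y * X) k j * ((X' * Y') j m * E m k)), Finset.sum_mul]
        refine Finset.sum_congr rfl fun j _ => ?_
        rw [Finset.mul_sum, Finset.sum_eq_single j]
        · rw [Finset.mul_sum]
          refine Finset.sum_congr rfl fun m _ => ?_
          rw [← (hEX'Y' m k j m).eq, ← mul_assoc _ (E m j), mul_assoc _ (E j k), hmul, if_pos rfl,
            mul_assoc]
        · intro n _ hn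
          rw [Finset.mul_sum]
          refine Finset.sum_eq_zero fun m _ => ?_
          rw [← mul_assoc _ (E m n), mul_assoc _ (E j k), hmul, if_neg hn.symm, mul_zero, zero_mul]
        · simp
    _ = (dX * dY) • E.trace := by
        simp only [← mul_assoc, ← Finset.sum_mul]
        simp only [← Matrix.mul_apply, hprod]
        simp [Matrix.smul_apply, Matrix.trace, Finset.smul_sum]
    _ = _ := by rw [hone]

end Fusion

section Sites

variable {N : ℕ}

/-- The operator `M` acting on the `c`-th tensor factor of the quantum space. -/
noncomputable def siteFun (c : Fin N) (M : Matrix (Fin 3) (Fin 3) ℂ) :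
    Matrix (HIdx N) (HIdx N) ℂ :=
  Matrix.of fun f g => M (f c) (g c) * (if ∀ d, d ≠ c → f d = g d then 1 else 0)

theorem siteFun_mul_apply (c : Fin N) (M : Matrix (Fin 3) (Fin 3) ℂ)
    (Q : Matrix (HIdx N) (HIdx N) ℂ) (f g : HIdx N) :
    (siteFun c M * Q) f g = ∑ k, M (f c) k * Q (Function.update f c k) g := by
  rw [Matrix.mul_apply]
  refine (Finset.sum_of_injOn (fun k => Function.update f c k)
    (Function.update_injective f c).injOn (by simp) ?_ ?_).symm
  · intro h _ hh
    have hne : ¬ ∀ d, d ≠ c → f d = h d := fun hd => hh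
      ⟨h c, by simp, by ext1 d; by_cases hdc : d = c <;> simp_all⟩
    simp [siteFun, hne]
  · intro k _
    have hd : ∀ d, d ≠ c → f d = Function.update f c k d := fun d hd => by simp [hd]
    simp only [siteFun, Matrix.of_apply, if_pos hd, Function.update_self, mul_one]

/-- Operators on the `c`-th tensor factor, as an algebra embedding. -/
noncomputable def site (c : Fin N) :
    Matrix (Fin 3) (Fin 3) ℂ →ₐ[ℂ] Matrix (HIdx N) (HIdx N) ℂ :=
  AlgHom.ofLinearMap
    { toFun := siteFun c
      map_add' := fun M M' => by ext; simp only [siteFun, Matrix.of_apply, Matrix.add_apply, add_mul]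
      map_smul' := fun z M => by ext; simp [siteFun] }
    (by
      ext f g
      change siteFun c 1 f g = _
      simp only [siteFun, Matrix.of_apply, Matrix.one_apply]
      by_cases h : f = g
      · simp [h]
      · have h' : ¬ (f c = g c ∧ ∀ d, d ≠ c → f d = g d) := fun ⟨h₁, h₂⟩ =>
          h (funext fun d => if hd : d = c then hd ▸ h₁ else h₂ d hd)
        rw [if_neg h]
        split_ifs <;> simp_all)
    (fun M M' => by
      change siteFun c (M * M') = siteFun c M * siteFun c M'
      ext f g
      rw [siteFun_mul_apply]
      have h (k : Fin 3) : (∀ d, d ≠ c → Function.update f c k d = g d) ↔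
          ∀ d, d ≠ c → f d = g d :=
        forall₂_congr fun d hd => by rw [Function.update_of_ne hd]
      simp only [siteFun, Matrix.of_apply, Matrix.mul_apply, Function.update_self, h,
        Finset.sum_mul, mul_assoc])

theorem siteFun_mul_siteFun_apply {c c' : Fin N} (hc : c ≠ c') (M M' : Matrix (Fin 3) (Fin 3) ℂ)
    (f g : HIdx N) :
    (siteFun c M * siteFun c' M') f g = M (f c) (g c) * M' (f c') (g c') *
      if ∀ d, d ≠ c → d ≠ c' → f d = g d then 1 else 0 := by
  rw [siteFun_mul_apply, Finset.sum_eq_single (g c)]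
  · have h : (∀ d, d ≠ c' → Function.update f c (g c) d = g d) ↔
        ∀ d, d ≠ c → d ≠ c' → f d = g d := by
      refine forall_congr' fun d => ?_
      by_cases hd : d = c
      · subst hd
        simp
      · simp [hd]
    simp only [siteFun, Matrix.of_apply, h, Function.update_of_ne hc.symm, mul_assoc]
  · intro k _ hk
    have h : ¬ ∀ d, d ≠ c' → Function.update f c k d = g d := fun h => hk (by simpa using h c hc)
    simp [siteFun, h]
  · simp

theorem commute_site {c c' : Fin N} (hc : c ≠ c') (M M' : Matrix (Fin 3) (Fin 3) ℂ) :
    Commute (site c M) (site c' M') := by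
  change siteFun c M * siteFun c' M' = siteFun c' M' * siteFun c M
  ext f g
  rw [siteFun_mul_siteFun_apply hc, siteFun_mul_siteFun_apply hc.symm, mul_comm (M _ _)]
  congr 2
  exact propext (forall_congr' fun d => forall_comm)

theorem entriesCommute_site {c c' : Fin N} (hc : c ≠ c')
    (X Y : Matrix (Fin 3) (Fin 3) (Matrix (Fin 3) (Fin 3) ℂ)) :
    EntriesCommute (X.map (site c)) (Y.map (site c')) :=
  fun _ _ _ _ => commute_site hc _ _

/-- The ordered product over the sites in `l` of the local matrices `F c`. -/
noncomputable def siteProd (F : Fin N → Matrix (Fin 3) (Fin 3) (Matrix (Fin 3) (Fin 3) ℂ))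
    (l : List (Fin N)) : Matrix (Fin 3) (Fin 3) (Matrix (HIdx N) (HIdx N) ℂ) :=
  (l.map fun c => (F c).map (site c)).prod

variable (F G Z : Fin N → Matrix (Fin 3) (Fin 3) (Matrix (Fin 3) (Fin 3) ℂ))

theorem siteProd_cons (c : Fin N) (l : List (Fin N)) :
    siteProd F (c :: l) = (F c).map (site c) * siteProd F l := by
  simp [siteProd]

theorem siteProd_append (l l' : List (Fin N)) :
    siteProd F (l ++ l') = siteProd F l * siteProd F l' := by
  simp [siteProd]

theorem entriesCommute_site_siteProd {c : Fin N} {l : List (Fin N)} (h : c ∉ l)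
    (X : Matrix (Fin 3) (Fin 3) (Matrix (Fin 3) (Fin 3) ℂ)) :
    EntriesCommute (X.map (site c)) (siteProd F l) := by
  refine EntriesCommute.list_prod_right fun Y hY => ?_
  obtain ⟨d, hd, rfl⟩ := List.mem_map.mp hY
  exact entriesCommute_site (fun hcd : c = d => h (hcd ▸ hd)) _ _

theorem entriesCommute_siteProd {l l' : List (Fin N)} (h : l.Disjoint l') :
    EntriesCommute (siteProd F l) (siteProd G l') := by
  refine EntriesCommute.symm (EntriesCommute.list_prod_right fun Y hY => ?_)
  obtain ⟨d, hd, rfl⟩ := List.mem_map.mp hY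
  exact (entriesCommute_site_siteProd G (fun hd' => h hd hd') _).symm

variable {F G Z}

theorem fuses_siteProd {r : ℂ} (h : ∀ c, Fuses r (F c) (G c) (Z c)) {l : List (Fin N)}
    (hl : l.Nodup) : Fuses r (siteProd F l) (siteProd G l) (siteProd Z l) := by
  induction l with
  | nil => simpa [siteProd] using Fuses.one
  | cons c l ih =>
    rw [List.nodup_cons] at hl
    simp only [siteProd_cons]
    exact ((h c).map (site c)).mul (ih hl.2) (entriesCommute_site_siteProd F hl.1 _)

theorem siteProd_mul_transpose {d : Fin N → ℂ} (h : ∀ c, F c * (Z c)ᵀ = d c • 1)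
    {l : List (Fin N)} (hl : l.Nodup) :
    siteProd F l * (siteProd Z l)ᵀ = (l.map d).prod • 1 := by
  induction l with
  | nil => simp [siteProd]
  | cons c l ih =>
    rw [List.nodup_cons] at hl
    have hc : (F c).map (site c) * ((Z c).map (site c))ᵀ =
        d c • (1 : Matrix (Fin 3) (Fin 3) (Matrix (HIdx N) (HIdx N) ℂ)) := by
      rw [← Matrix.transpose_map, ← Matrix.map_mul, h c]
      ext1 i j
      by_cases hij : i = j <;> simp [hij]
    rw [siteProd_cons, siteProd_cons, (entriesCommute_site_siteProd Z hl.1 _).transpose_mul,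
      Matrix.mul_assoc, ← Matrix.mul_assoc (siteProd F l), ih hl.2]
    simp [hc, smul_smul, mul_comm]

end Sites

section TransferMatrices

variable {N : ℕ}

/-- The monodromy matrix as a matrix over the auxiliary space with entries in `End H`. -/
theorem Mon_eq_comp (q : ℂ) (ζ : Fin N → ℂ) (K : Matrix (Fin 3) (Fin 3) ℂ) (u : ℂ) :
    Mon N q ζ K u = Matrix.compRingEquiv (Fin 3) (HIdx N) ℂ
      (K.map (algebraMap ℂ _) *
        siteProd (fun c => laxOp q (u / ζ c)) (List.finRange N).reverse) := by
  rw [Mon, siteProd, map_mul, map_list_prod, List.map_map]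
  congr 1
  ext ⟨i, f⟩ ⟨j, g⟩
  simp [Kaux, Matrix.algebraMap_matrix_apply]

theorem T1_eq_trace {q u : ℂ} {ζ : Fin N → ℂ} {K : Matrix (Fin 3) (Fin 3) ℂ}
    {X : Matrix (Fin 3) (Fin 3) (Matrix (HIdx N) (HIdx N) ℂ)}
    (hX : Mon N q ζ K u = Matrix.compRingEquiv (Fin 3) (HIdx N) ℂ X) :
    T1 N q ζ K u = X.trace := by
  ext f g
  simp [T1, hX, Matrix.trace, Matrix.sum_apply]

theorem embP_mul_apply (P : Matrix (Fin 3 × Fin 3) (Fin 3 × Fin 3) ℂ)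
    (Q : Matrix (Fin 3 × Fin 3 × HIdx N) (Fin 3 × Fin 3 × HIdx N) ℂ) (x : Fin 3 × Fin 3)
    (f : HIdx N) (z : Fin 3 × Fin 3 × HIdx N) :
    (embP N P * Q) (x.1, x.2, f) z = ∑ y, P x y * Q (y.1, y.2, f) z := by
  simp [Matrix.mul_apply, embP, Fintype.sum_prod_type]

theorem embB_mul_embA_apply (X Y : Matrix (Fin 3) (Fin 3) (Matrix (HIdx N) (HIdx N) ℂ))
    (x y : Fin 3 × Fin 3) (f g : HIdx N) :
    (embB N (Matrix.compRingEquiv (Fin 3) (HIdx N) ℂ X) *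
      embA N (Matrix.compRingEquiv (Fin 3) (HIdx N) ℂ Y)) (x.1, x.2, f) (y.1, y.2, g) =
      pairOp X Y x y f g := by
  simp [Matrix.mul_apply, embA, embB, pairOp, Fintype.sum_prod_type]

theorem T2_eq_sum {q p u : ℂ} {ζ : Fin N → ℂ} {K : Matrix (Fin 3) (Fin 3) ℂ}
    {X Y : Matrix (Fin 3) (Fin 3) (Matrix (HIdx N) (HIdx N) ℂ)}
    (hX : Mon N q ζ K u = Matrix.compRingEquiv (Fin 3) (HIdx N) ℂ X)
    (hY : Mon N q ζ K (u / p) = Matrix.compRingEquiv (Fin 3) (HIdx N) ℂ Y) :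
    T2 N q p ζ K u = ∑ x, ∑ y, Pm q p x y • pairOp X Y y x := by
  ext f g
  rw [T2, Matrix.of_apply, ← Fintype.sum_prod_type', hX, hY]
  simp only [Matrix.sum_apply, Matrix.smul_apply, smul_eq_mul]
  refine Finset.sum_congr rfl fun x _ => ?_
  rw [Matrix.mul_assoc, embP_mul_apply]
  exact Finset.sum_congr rfl fun y _ => by rw [embB_mul_embA_apply]

end TransferMatrices

/-- `T₁(ζ_b) T₂(ζ_b/p)` equals the quantum determinant (an
explicit central scalar) times the identity. -/
theorem quantum_determinant_identity (N : ℕ) (hN : 1 ≤ N) (q p : ℂ)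
    (hq : q ≠ 0) (hq2 : q ^ 2 ≠ 1) (hp : p ^ 3 = q)
    (ζ : Fin N → ℂ) (hζ : ∀ b, ζ b ≠ 0) (K : Matrix (Fin 3) (Fin 3) ℂ)
    (hK : ∀ w : ℂ, w ≠ 0 → RpM q w * (K ⊗ₖ K) = (K ⊗ₖ K) * RpM q w)
    (b : Fin N) :
    T1 N q ζ K (ζ b) * T2 N q p ζ K (ζ b / p)
      = (K.det * ∏ c : Fin N,
          ((ζ b ^ 3 * q / ζ c ^ 3 - ζ c ^ 3 / (q * ζ b ^ 3))
            * (ζ b ^ 3 / (q * ζ c ^ 3) - q * ζ c ^ 3 / ζ b ^ 3)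
            * (ζ b ^ 3 / (q ^ 2 * ζ c ^ 3) - q ^ 2 * ζ c ^ 3 / ζ b ^ 3)))
        • (1 : Matrix (HIdx N) (HIdx N) ℂ) := by
  subst hp
  have hp0 : p ≠ 0 := fun h => hq (by simp [h])
  set q : ℂ := p ^ 3 with hqdef
  -- local data at the spectral parameter `ζ b`
  let s : Fin N → ℂ := fun c => q ^ 2 / (ζ b / ζ c) ^ 3 - (ζ b / ζ c) ^ 3 / q ^ 2
  let d : Fin N → ℂ := fun c =>
    s c * ((((ζ b / ζ c) ^ 3 * q - ((ζ b / ζ c) ^ 3 * q)⁻¹) *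
      (q / (ζ b / ζ c) ^ 3 - (ζ b / ζ c) ^ 3 / q)))
  let F : Fin N → Matrix (Fin 3) (Fin 3) (Matrix (Fin 3) (Fin 3) ℂ) :=
    fun c => laxOp q (ζ b / ζ c)
  let Z : Fin N → Matrix (Fin 3) (Fin 3) (Matrix (Fin 3) (Fin 3) ℂ) :=
    fun c => (s c • laxInv q (ζ b / ζ c))ᵀ
  let E : Matrix (Fin 3) (Fin 3) (Matrix (HIdx N) (HIdx N) ℂ) :=
    Matrix.of fun i j => site b (Matrix.single j i 1)
  have hratio (c : Fin N) : ζ b / ζ c ≠ 0 := div_ne_zero (hζ b) (hζ c)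
  have hFZ (c : Fin N) : F c * (Z c)ᵀ = d c • 1 := by
    simp only [F, Z, d, Matrix.transpose_transpose, Matrix.mul_smul,
      laxOp_mul_laxInv hq (hratio c), smul_smul]
  have hfuse (c : Fin N) :
      Fuses p (laxOp q (ζ b / p / ζ c)) (laxOp q (ζ b / p / p / ζ c)) (Z c) := by
    have h := fuses_laxOp hp0 (hratio c)
    rwa [div_right_comm (ζ b) (ζ c) p, div_right_comm (ζ b / p) (ζ c) p] at h
  -- the twist
  obtain ⟨ZK, hZK, hKZ⟩ := twist_fuses hp0 hq2 (K := K) (by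
    rw [Pm, Matrix.smul_mul, Matrix.mul_smul, hK _ (inv_ne_zero hp0)])
  let KA : Matrix (Fin 3) (Fin 3) (Matrix (HIdx N) (HIdx N) ℂ) := K.map (algebraMap ℂ _)
  let ZA : Matrix (Fin 3) (Fin 3) (Matrix (HIdx N) (HIdx N) ℂ) := ZK.map (algebraMap ℂ _)
  have hKA : KA * ZAᵀ = K.det • 1 := by
    simp only [KA, ZA]
    rw [← Matrix.transpose_map, ← Matrix.map_mul, hKZ]
    ext1 i j
    by_cases hij : i = j <;> simp [hij, Algebra.algebraMap_eq_smul_one]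
  -- the chain, split at site `b`
  have hl : (List.finRange N).reverse.Nodup := List.nodup_reverse.mpr (List.nodup_finRange N)
  have hprod : ((List.finRange N).reverse.map d).prod = ∏ c, d c := by
    rw [Fin.prod_univ_def]
    exact ((List.reverse_perm _).map d).prod_eq
  have hT1 := T1_eq_trace (Mon_eq_comp q ζ K (ζ b))
  have hT2 : T2 N q p ζ K (ζ b / p) = (ZA * siteProd Z (List.finRange N).reverse).trace := by
    rw [T2_eq_sum (Mon_eq_comp q ζ K (ζ b / p)) (Mon_eq_comp q ζ K (ζ b / p / p)),
      ← antisymBasis_mul_antisymDual hp0 hq2]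
    refine Fuses.sum_projector_mul ?_ hp0
    exact (hZK.map (Algebra.ofId ℂ _)).mul (fuses_siteProd hfuse hl)
      (EntriesCommute.map_algebraMap_right K).symm
  obtain ⟨l₁, l₂, hsplit⟩ := List.append_of_mem (List.mem_reverse.mpr (List.mem_finRange b))
  rw [hsplit] at hl hprod hT1 hT2
  obtain ⟨hl₁, hl₂, hdisj⟩ := List.nodup_append'.mp hl
  obtain ⟨hb₂, hl₂⟩ := List.nodup_cons.mp hl₂
  have hb₁ : b ∉ l₁ := fun h => hdisj h (by simp)
  have hdisj' : l₁.Disjoint l₂ := fun c h h' => hdisj h (by simp [h'])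
  have hbb : ζ b / ζ b = 1 := div_self (hζ b)
  have hFb : (F b).map (site b) = (q - q⁻¹) • E := by
    ext1 i j
    simp only [F, E, hbb, laxOp_one, Matrix.map_apply, Matrix.smul_apply, Matrix.of_apply, map_smul]
  have hZb : ((Z b).map (site b))ᵀ = (s b * (q - q⁻¹)) • E := by
    ext1 i j
    simp only [Z, E, hbb, laxInv_one, Matrix.map_apply, Matrix.smul_apply, Matrix.of_apply,
      Matrix.transpose_apply, map_smul, smul_smul]
  have hEZ {l : List (Fin N)} (h : b ∉ l) : EntriesCommute E (siteProd Z l)ᵀ :=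
    (entriesCommute_site_siteProd Z h _).transpose_right
  have hZA (X : Matrix (Fin 3) (Fin 3) (Matrix (HIdx N) (HIdx N) ℂ)) : EntriesCommute X ZAᵀ :=
    (EntriesCommute.map_algebraMap_right ZK).transpose_right
  have hX : KA * siteProd F l₁ * ((siteProd Z l₁)ᵀ * ZAᵀ) = (K.det * (l₁.map d).prod) • 1 := by
    rw [Matrix.mul_assoc, ← Matrix.mul_assoc (siteProd F l₁), siteProd_mul_transpose hFZ hl₁,
      Matrix.smul_mul, Matrix.one_mul, Matrix.mul_smul, hKA, smul_smul, mul_comm]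
  have hY := siteProd_mul_transpose hFZ hl₂
  have hmain := trace_mul_trace_of_matrixUnits (E := E) hX hY
    (EntriesCommute.mul_left (EntriesCommute.map_algebraMap_right K).symm
      (entriesCommute_siteProd F F hdisj'))
    (EntriesCommute.mul_left
      (entriesCommute_siteProd Z Z hdisj').transpose_left.transpose_right (hZA _).symm)
    (entriesCommute_site_siteProd F hb₂ _)
    ((hEZ hb₁).mul_right (hZA E)) (hEZ hb₂)
    (by
      intro i j k l
      simp only [E, Matrix.of_apply, ← map_mul]
      split_ifs with h
      · simp [h]
      · simp [h])
    (by
      simp only [E, Matrix.trace, Matrix.diag_apply, Matrix.of_apply, ← map_sum]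
      rw [Matrix.sum_single_one, map_one])
  have hT1' : T1 N q ζ K (ζ b) = (q - q⁻¹) • (KA * siteProd F l₁ * E * siteProd F l₂).trace := by
    rw [hT1, siteProd_append, siteProd_cons]
    change (KA * (siteProd F l₁ * ((F b).map (site b) * siteProd F l₂))).trace = _
    rw [hFb, ← Matrix.trace_smul]
    simp only [Matrix.mul_assoc, Matrix.smul_mul, Matrix.mul_smul]
  have hT2' : T2 N q p ζ K (ζ b / p) = (s b * (q - q⁻¹)) •
      ((siteProd Z l₂)ᵀ * E * ((siteProd Z l₁)ᵀ * ZAᵀ)).trace := by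
    have hcomm₁ : EntriesCommute (siteProd Z l₁) ((Z b).map (site b) * siteProd Z l₂) :=
      EntriesCommute.mul_right (entriesCommute_site_siteProd Z hb₁ _).symm
        (entriesCommute_siteProd Z Z hdisj')
    have hcomm₂ : EntriesCommute ZA (siteProd Z l₁ * ((Z b).map (site b) * siteProd Z l₂)) :=
      (EntriesCommute.map_algebraMap_right ZK).symm
    rw [hT2, siteProd_append, siteProd_cons, ← Matrix.trace_transpose, hcomm₂.transpose_mul,
      hcomm₁.transpose_mul, (entriesCommute_site_siteProd Z hb₂ _).transpose_mul, hZb,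
      ← Matrix.trace_smul]
    simp only [Matrix.mul_assoc, Matrix.smul_mul, Matrix.mul_smul]
  rw [hT1', hT2', smul_mul_smul_comm, hmain, smul_smul]
  congr 1
  have hdb : d b = (q - q⁻¹) * (s b * (q - q⁻¹)) := by
    simp only [d, hbb]
    ring
  calc _ = K.det * (l₁.map d ++ d b :: l₂.map d).prod := by
        rw [List.prod_append, List.prod_cons, hdb]
        ring
    _ = K.det * ∏ c, d c := by rw [← hprod, List.map_append, List.map_cons]
    _ = _ := by
        congr 1
        refine Finset.prod_congr rfl fun c _ => ?_
        have hb := hζ b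
        have hc := hζ c
        simp only [d, s]
        clear_value q
        field_simp
        ring
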